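/- arXiv:2109.13552 — 2 statements merged into one kernel-verified Lean document; each statement's English description precedes it below -/
import Mathlib

section
/- Let d ≥ 2, let D ∈ ℂ[t] be squarefree of degree 2d, let (A,B) be a solution of the Pell–Abel equation for D, and set n = deg A. Let m ≥ 1 be a divisor of n with n/m ≥ d. Then the following are equivalent: (i) (A,B) is an m-th power, i.e., there exists a solution (A′,B′) of the Pell–Abel equation for D such that A = T_m(A′) or A = −T_m(A′); (ii) the monodromy group Mon(A²), acting on the 2n roots of A(Y)² − x, preserves some partition of the set of roots into 2m blocks each of cardinality n/m. -/
open Polynomial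

/-- The polynomial `A(Y)² - x` over the rational function field `ℂ(x)`, whose splitting
field carries the monodromy (Galois) action for the cover given by `A²`. -/
noncomputable def pellCover (A : Polynomial ℂ) : Polynomial (RatFunc ℂ) :=
  (A ^ 2).map (algebraMap ℂ (RatFunc ℂ)) - Polynomial.C RatFunc.X


theorem aux_sqf (g : ℂ[X]) (hg : g ≠ 0) : ∃ S R : ℂ[X], Squarefree S ∧ g = S * R ^ 2 := by
  induction hN : g.natDegree using Nat.strong_induction_on generalizing g with
  | _ N ih =>
    by_cases hs : Squarefree g
    · exact ⟨g, 1, hs, by simp⟩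
    · simp only [Squarefree, not_forall] at hs
      obtain ⟨x, ⟨g', hx⟩, hu⟩ := hs
      have hx0 : x ≠ 0 := by rintro rfl; simp at hx; exact hg hx
      have hg' : g' ≠ 0 := by rintro rfl; simp at hx; exact hg hx
      have hdx : 0 < x.natDegree := by
        rw [Nat.pos_iff_ne_zero]; intro h
        apply hu
        rw [Polynomial.isUnit_iff_degree_eq_zero, Polynomial.degree_eq_natDegree hx0, h]; rfl
      have := ih g'.natDegree (by
        rw [← hN, hx, natDegree_mul (mul_ne_zero hx0 hx0) hg', natDegree_mul hx0 hx0]; omega) g' hg' rfl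
      obtain ⟨S, R, hS, hR⟩ := this
      exact ⟨S, x * R, hS, by rw [hx, hR]; ring⟩

/-- If `D B² = E F²` with `D` squarefree, then `E = D K²`. -/
theorem aux_sqdvd (D B E F : ℂ[X]) (hD : Squarefree D) (hF : F ≠ 0)
    (h : D * B ^ 2 = E * F ^ 2) : ∃ K, E = D * K ^ 2 := by
  have h1 : F ^ 2 ∣ (D * B) ^ 2 := ⟨D * E, by linear_combination D * h⟩
  have h2 : F ∣ D * B := (IsIntegrallyClosed.pow_dvd_pow_iff two_ne_zero).1 h1
  obtain ⟨K, hK⟩ := h2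
  have h3 : K ^ 2 = D * E := by
    apply mul_left_cancel₀ (pow_ne_zero 2 hF)
    have : (D * B) ^ 2 = (F * K) ^ 2 := by rw [hK]
    linear_combination D * h - this
  have h4 : D ∣ K := (hD.dvd_pow_iff_dvd two_ne_zero).1 ⟨E, h3⟩
  obtain ⟨L, hL⟩ := h4
  refine ⟨L, ?_⟩
  apply mul_left_cancel₀ hD.ne_zero
  rw [← h3, hL]; ring

theorem aux_kdvd (S h D K : ℂ[X]) (hS : Squarefree S) (hE : S.comp h = D * K ^ 2) :
    K ∣ derivative h := by
  have hsep : S.Separable := (PerfectField.separable_iff_squarefree).2 hS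
  have hc : IsCoprime (S.comp h) ((derivative S).comp h) := by
    obtain ⟨a, b, hab⟩ := hsep
    refine ⟨a.comp h, b.comp h, ?_⟩
    rw [← mul_comp, ← mul_comp, ← add_comp, hab, one_comp]
  have hK : IsCoprime K ((derivative S).comp h) := by
    refine hc.of_isCoprime_of_dvd_left ?_
    rw [hE]; exact ⟨D * K, by ring⟩
  have hd : derivative (S.comp h) = derivative (D * K ^ 2) := by rw [hE]
  rw [derivative_comp] at hd
  have : K ∣ derivative h * (derivative S).comp h := by
    rw [hd]
    refine ⟨derivative D * K + D * 2 * derivative K, ?_⟩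
    rw [derivative_mul, derivative_pow]; simp only [Nat.cast_ofNat, C_ofNat]; ring
  exact hK.dvd_of_dvd_mul_right this

theorem aux_kdeg (S h D K : ℂ[X]) (hS : Squarefree S) (hE : S.comp h = D * K ^ 2)
    (hh : 0 < h.natDegree) : K.natDegree + 1 ≤ h.natDegree := by
  have h1 := aux_kdvd S h D K hS hE
  have h2 : derivative h ≠ 0 := by
    intro h0
    have := derivative_eq_zero.1 h0
    omega
  have := natDegree_le_of_dvd h1 h2
  have := natDegree_derivative_lt (p := h) (by omega)
  omega

open Polynomial.Chebyshev in
theorem aux_cheb (G H : ℂ[X]) (h : G ^ 2 - (X ^ 2 - 1) * H ^ 2 = 1) :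
    ∃ j : ℤ, (G = T ℂ j ∧ H = U ℂ (j - 1)) ∨ (G = - T ℂ j ∧ H = - U ℂ (j - 1)) := by
  induction hN : H.natDegree using Nat.strong_induction_on generalizing G H with
  | _ N ih =>
    by_cases hH : H = 0
    · subst hH
      have : (G - 1) * (G + 1) = 0 := by linear_combination h
      rcases mul_eq_zero.1 this with h1 | h1
      · exact ⟨0, Or.inl ⟨by simp; linear_combination h1, by simp⟩⟩
      · exact ⟨0, Or.inr ⟨by simp; linear_combination h1, by simp⟩⟩
    -- key step
    have key : ∀ G : ℂ[X], G ^ 2 - (X ^ 2 - 1) * H ^ 2 = 1 →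
        X * H + G ≠ 0 → N + 1 ≤ (X * H + G).natDegree → 
        ∃ j : ℤ, (G = T ℂ j ∧ H = U ℂ (j - 1)) ∨ (G = - T ℂ j ∧ H = - U ℂ (j - 1)) := by
      intro G h hne hdeg
      have hp : (X * H - G) * (X * H + G) = H ^ 2 - 1 := by linear_combination -h
      have step : ∀ j : ℤ, (X * G - (X ^ 2 - 1) * H = T ℂ j ∧ X * H - G = U ℂ (j - 1)) → 
          (G = T ℂ (j+1) ∧ H = U ℂ (j + 1 - 1)) := by
        rintro j ⟨h1, h2⟩
        have e1 := T_eq_X_mul_T_sub_pol_U ℂ (j - 1)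
        have e2 := U_eq_X_mul_U_add_T ℂ (j - 1)
        rw [show j - 1 + 2 = j + 1 by ring, show j - 1 + 1 = j by ring] at e1
        rw [show j - 1 + 1 = j by ring] at e2
        rw [show j + 1 - 1 = j by ring, e1, e2, ← h1, ← h2]
        constructor <;> ring
      have step' : ∀ j : ℤ, (X * G - (X ^ 2 - 1) * H = -T ℂ j ∧ X * H - G = -U ℂ (j - 1)) → 
          (G = -T ℂ (j+1) ∧ H = -U ℂ (j + 1 - 1)) := by
        rintro j ⟨h1, h2⟩
        have e1 := T_eq_X_mul_T_sub_pol_U ℂ (j - 1)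
        have e2 := U_eq_X_mul_U_add_T ℂ (j - 1)
        rw [show j - 1 + 2 = j + 1 by ring, show j - 1 + 1 = j by ring] at e1
        rw [show j - 1 + 1 = j by ring] at e2
        rw [show j + 1 - 1 = j by ring, e1, e2]
        constructor
        · linear_combination X * h1 + (X^2-1) * h2
        · linear_combination X * h2 + h1
      have hG1 : (X * G - (X ^ 2 - 1) * H) ^ 2 - (X ^ 2 - 1) * (X * H - G) ^ 2 = 1 := by
        linear_combination h
      have : ∃ j : ℤ, (X * G - (X ^ 2 - 1) * H = T ℂ j ∧ X * H - G = U ℂ (j - 1)) ∨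
          (X * G - (X ^ 2 - 1) * H = -T ℂ j ∧ X * H - G = -U ℂ (j - 1)) := by
        by_cases h0 : X * H - G = 0
        · rw [h0] at hG1 ⊢
          have : ((X * G - (X ^ 2 - 1) * H) - 1) * ((X * G - (X ^ 2 - 1) * H) + 1) = 0 := by
            linear_combination hG1
          rcases mul_eq_zero.1 this with h1 | h1
          · exact ⟨0, Or.inl ⟨by simp; linear_combination h1, by simp⟩⟩
          · exact ⟨0, Or.inr ⟨by simp; linear_combination h1, by simp⟩⟩
        · refine ih _ ?_ _ _ hG1 rfl
          have := congrArg natDegree hp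
          rw [natDegree_mul h0 hne] at this
          have h2 : (H ^ 2 - 1).natDegree ≤ 2 * N := by
            refine (natDegree_sub_le _ _).trans ?_
            simp [natDegree_pow, hN]
          omega
      obtain ⟨j, hj | hj⟩ := this
      · exact ⟨j + 1, Or.inl (step j hj)⟩
      · exact ⟨j + 1, Or.inr (step' j hj)⟩
    -- one of the two signs has large degree
    have hXH : (X * H).natDegree = N + 1 := by rw [natDegree_X_mul hH, hN]
    have hlc : (X * H + G).coeff (N + 1) ≠ 0 ∨ (X * H + -G).coeff (N + 1) ≠ 0 := by
      by_contra! hc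
      have : (X * H).coeff (N + 1) = 0 := by
        have h1 := hc.1
        have h2 := hc.2
        simp only [coeff_add, coeff_neg] at h1 h2
        linear_combination (h1 + h2) / 2
      rw [← hXH, ← leadingCoeff, leadingCoeff_eq_zero] at this
      exact (mul_ne_zero X_ne_zero hH) this
    rcases hlc with hl | hl
    · exact key G h (by rintro h0; rw [h0] at hl; simp at hl) (le_natDegree_of_ne_zero hl)
    · obtain ⟨j, hj⟩ := key (-G) (by linear_combination h)
        (by rintro h0; rw [h0] at hl; simp at hl) (le_natDegree_of_ne_zero hl)
      refine ⟨-j, ?_⟩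
      rw [T_neg, U_neg_sub_one]
      rcases hj with ⟨h1, h2⟩ | ⟨h1, h2⟩
      · right; exact ⟨by rw [← h1]; ring, by rw [h2]; ring⟩
      · left; exact ⟨by linear_combination -h1, h2⟩

/-- the purely polynomial part of (ii) → (i). -/
theorem aux_poly (d : ℕ) (hd : 2 ≤ d) (D A B g h : ℂ[X])
    (hD : Squarefree D) (hdeg : D.natDegree = 2*d)
    (hPell : A ^ 2 - D * B ^ 2 = 1) (m k : ℕ) (hm : 1 ≤ m)
    (hnd : d ≤ k) (hA : A.natDegree = m * k)
    (hgh : A ^ 2 = g.comp h) (hh : h.natDegree = k) :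
    ∃ A' B' : ℂ[X], B' ≠ 0 ∧ A' ^ 2 - D * B' ^ 2 = 1 ∧
        (A = (Polynomial.Chebyshev.T ℂ (m : ℤ)).comp A' ∨
         A = -((Polynomial.Chebyshev.T ℂ (m : ℤ)).comp A')) := by
  have hk : 0 < k := by omega
  have hmk : 0 < m * k := Nat.mul_pos hm hk
  have hA0 : A ≠ 0 := by rintro rfl; simp at hA; omega
  have hg0 : g ≠ 0 := by
    rintro rfl; simp at hgh; exact hA0 hgh
  have hD0 := hD.ne_zero
  have compne : ∀ P : ℂ[X], P ≠ 0 → P.comp h ≠ 0 := by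
    intro P hP h0
    rw [comp_eq_zero_iff] at h0
    rcases h0 with h0 | ⟨_, h0⟩
    · exact hP h0
    · rw [h0] at hh; simp at hh; omega
  have hgd : g.natDegree = 2 * m := by
    have := congrArg natDegree hgh
    rw [natDegree_pow, natDegree_comp, hA, hh, ← mul_assoc] at this
    exact (Nat.eq_of_mul_eq_mul_right hk this).symm
  -- Step 1: g is a square
  obtain ⟨S, R, hS, hg⟩ := aux_sqf g hg0
  have hR0 : R ≠ 0 := by rintro rfl; simp at hg; exact hg0 hg
  have e1 : S.comp h * (R.comp h) ^ 2 = A ^ 2 := by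
    rw [hgh, hg]; simp [mul_comp, pow_comp]
  obtain ⟨K, hK⟩ := aux_sqdvd 1 A (S.comp h) (R.comp h) squarefree_one (compne R hR0)
    (by rw [e1, one_mul])
  have hKd := aux_kdeg S h 1 K hS hK (by omega)
  have hsd : S.natDegree = 0 := by
    have h1 := congrArg natDegree hK
    rw [natDegree_comp, one_mul, natDegree_pow, hh] at h1
    have h2 := congrArg natDegree hg
    rw [hgd, natDegree_mul hS.ne_zero (pow_ne_zero 2 hR0), natDegree_pow] at h2
    have h3 : S.natDegree < 2 := by
      by_contra! hc
      nlinarith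
    omega
  obtain ⟨c, hc⟩ := natDegree_eq_zero.1 hsd
  obtain ⟨c', hc'⟩ := IsAlgClosed.exists_pow_nat_eq c (n := 2) (by norm_num)
  obtain ⟨G, hG⟩ : ∃ G : ℂ[X], g = G ^ 2 := ⟨C c' * R, by rw [hg, ← hc, ← hc', C_pow]; ring⟩
  have hGd : G.natDegree = m := by
    have := congrArg natDegree hG
    rw [hgd, natDegree_pow] at this; omega
  have hAG : A = G.comp h ∨ A = - G.comp h := by
    rw [← sq_eq_sq_iff_eq_or_eq_neg, hgh, hG, pow_comp]
  -- Step 2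
  have hG1 : G ^ 2 - 1 ≠ 0 := by
    intro h0
    have : (G^2).natDegree = 0 := by rw [sub_eq_zero.1 h0]; simp
    rw [natDegree_pow] at this; omega
  obtain ⟨S, R, hS, hg'⟩ := aux_sqf _ hG1
  have hR0 : R ≠ 0 := by rintro rfl; simp at hg'; exact hG1 hg'
  have e1 : D * B ^ 2 = S.comp h * (R.comp h) ^ 2 := by
    have := congrArg (fun p => p.comp h) hg'
    simp only [mul_comp, sub_comp, pow_comp, one_comp] at this
    rw [← this, ← pow_comp, ← hG, ← hgh]; linear_combination -hPell
  obtain ⟨K, hK⟩ := aux_sqdvd D B (S.comp h) (R.comp h) hD (compne R hR0) e1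
  have hKd := aux_kdeg S h D K hS hK (by omega)
  have hK0 : K ≠ 0 := by
    rintro rfl; simp at hK; exact compne S hS.ne_zero hK
  have hsd : S.natDegree = 2 := by
    have h1 := congrArg natDegree hK
    rw [natDegree_comp, natDegree_mul hD0 (pow_ne_zero 2 hK0), natDegree_pow, hh, hdeg] at h1
    have h2 := congrArg natDegree hg'
    rw [natDegree_mul hS.ne_zero (pow_ne_zero 2 hR0), natDegree_pow, ← C_1, natDegree_sub_C,
      natDegree_pow] at h2
    have h3 : S.natDegree < 4 := by
      by_contra! hc
      nlinarith
    have h4 : S.natDegree ≠ 0 := by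
      intro h0; rw [h0] at h1; omega
    omega
  -- roots of S
  have hcard : S.roots.card = 2 := by
    rw [← hsd]; exact (splits_iff_card_roots.1 (IsAlgClosed.splits S))
  have hnod : S.roots.Nodup := nodup_roots (PerfectField.separable_iff_squarefree.2 hS)
  obtain ⟨w1, w2, hw⟩ := Multiset.card_eq_two.1 hcard
  have hw12 : w1 ≠ w2 := by
    rw [hw] at hnod; simpa using hnod
  have hSf : S = C S.leadingCoeff * ((X - C w1) * (X - C w2)) := by
    have := C_leadingCoeff_mul_prod_multiset_X_sub_C (p := S) (by rw [hcard, hsd])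
    rw [hw] at this
    simpa using this.symm
  have hl0 : S.leadingCoeff ≠ 0 := leadingCoeff_ne_zero.2 hS.ne_zero
  set l := S.leadingCoeff
  have hδ : w1 - w2 ≠ 0 := sub_ne_zero.2 hw12
  -- affine change of variables
  set L : ℂ[X] := C ((w1 - w2)/2) * X + C ((w1 + w2)/2) with hL
  set M : ℂ[X] := C (2/(w1 - w2)) * X - C ((w1 + w2)/(w1 - w2)) with hM
  have hLM : L.comp M = X := by
    simp only [hL, hM, add_comp, mul_comp, C_comp, X_comp, mul_sub, ← mul_assoc, ← C_mul, sub_add,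
      ← C_sub]
    rw [show (w1 - w2) / 2 * (2 / (w1 - w2)) = 1 by field_simp,
      show ((w1 - w2) / 2 * ((w1 + w2) / (w1 - w2)) - (w1 + w2) / 2) = 0 by field_simp; ring]
    simp
  obtain ⟨l1, hl1⟩ := IsAlgClosed.exists_pow_nat_eq l (n := 2) (by norm_num)
  have hl10 : l1 ≠ 0 := by rintro rfl; simp at hl1; exact hl0 hl1.symm
  have hSL : S.comp L = (X ^ 2 - 1) * (C (l1 * (w1 - w2)/2)) ^ 2 := by
    rw [hSf]
    simp only [mul_comp, sub_comp, C_comp, X_comp]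
    have a1 : L - C w1 = C ((w1 - w2)/2) * (X - 1) := by
      rw [hL, mul_sub, mul_one, add_sub_assoc, ← C_sub,
        show (w1 + w2)/2 - w1 = -((w1 - w2)/2) by ring, C_neg]; ring
    have a2 : L - C w2 = C ((w1 - w2)/2) * (X + 1) := by
      rw [hL, mul_add, mul_one, add_sub_assoc, ← C_sub]; congr 2; ring
    rw [a1, a2, ← hl1, mul_div_assoc]
    simp only [C_mul, C_pow]
    ring
  have hcheb := aux_cheb (G.comp L) (C (l1 * (w1 - w2)/2) * R.comp L) (by
    have := congrArg (fun p => p.comp L) hg'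
    simp only [mul_comp, sub_comp, pow_comp, one_comp, hSL] at this
    linear_combination this)
  obtain ⟨j, hj⟩ := hcheb
  have hjj : G.comp L = Chebyshev.T ℂ j ∨ G.comp L = - Chebyshev.T ℂ j := by
    rcases hj with hj | hj
    · exact Or.inl hj.1
    · exact Or.inr hj.1
  have hLd : L.natDegree = 1 := natDegree_linear (by simpa using hδ)
  have hjm : Chebyshev.T ℂ j = Chebyshev.T ℂ (m : ℤ) := by
    have h1 : (G.comp L).natDegree = m := by rw [natDegree_comp, hLd, hGd, mul_one]
    have h2 : j.natAbs = m := by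
      rw [← h1, ← Chebyshev.natDegree_T ℂ j]
      rcases hjj with h | h <;> rw [h]
      rw [natDegree_neg]
    rw [← Chebyshev.T_natAbs, h2]
  rw [hjm] at hjj
  have hGM : G = (G.comp L).comp M := by rw [comp_assoc, hLM, comp_X]
  have hA'1 : L.comp (M.comp h) = h := by rw [← comp_assoc, hLM, X_comp]
  set c0 : ℂ := (l1 * (w1 - w2)/2) with hc0
  have hc00 : c0 ≠ 0 := by rw [hc0]; exact div_ne_zero (mul_ne_zero hl10 hδ) two_ne_zero
  refine ⟨M.comp h, C (c0⁻¹) * K, mul_ne_zero (by simpa using hc00) hK0, ?_, ?_⟩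
  · have := congrArg (fun p => p.comp (M.comp h)) hSL
    simp only [comp_assoc, hA'1, hK, mul_comp, sub_comp, pow_comp, X_comp, one_comp, C_comp] at this
    have hcc : C c0 * C c0⁻¹ = (1 : ℂ[X]) := by rw [← C_mul, mul_inv_cancel₀ hc00, C_1]
    have e : (M.comp h ^ 2 - 1) = D * (C c0⁻¹ * K) ^ 2 := by
      have : (M.comp h ^ 2 - 1) * (C c0 * C c0⁻¹) ^ 2 = D * (C c0⁻¹ * K) ^ 2 := by
        linear_combination -(C c0⁻¹)^2 * this
      rwa [hcc, one_pow, mul_one] at this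
    linear_combination e
  · have : A = ((G.comp L).comp M).comp h ∨ A = -((G.comp L).comp M).comp h := by rwa [← hGM]
    rcases this with h1 | h1 <;> rcases hjj with h2 | h2 <;> rw [h2, comp_assoc] at h1
    · exact Or.inl h1
    · right; rw [h1, neg_comp]
    · exact Or.inr h1
    · left; rw [h1, neg_comp, neg_neg]

theorem aux_irr (f : ℂ[X]) (hf : f.natDegree ≠ 0) :
    Irreducible (f.map (algebraMap ℂ (RatFunc ℂ)) - C RatFunc.X) := by
  have hφ : Irreducible (f.map (C : ℂ →+* ℂ[X]) - C X) := by
    have h1 : f.map (C : ℂ →+* ℂ[X]) - C X = Bivariate.swap (C f - X) := by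
      rw [map_sub, Bivariate.swap_C, Bivariate.swap_Y]
    rw [h1, MulEquiv.irreducible_iff]
    have : (C f - X : ℂ[X][X]) = -(X - C f) := by ring
    rw [this]
    exact (Associated.refl (X - C f)).neg_left.symm.irreducible (irreducible_X_sub_C f)
  have hdeg : (f.map (C : ℂ →+* ℂ[X]) - C X).natDegree = f.natDegree := by
    rw [natDegree_sub_C, natDegree_map_eq_of_injective C_injective]
  have hmap : (f.map (C : ℂ →+* ℂ[X]) - C X).map (algebraMap ℂ[X] (RatFunc ℂ)) =
      f.map (algebraMap ℂ (RatFunc ℂ)) - C RatFunc.X := by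
    rw [Polynomial.map_sub, Polynomial.map_map, map_C]
    congr 2
  rw [← hmap, ← IsPrimitive.irreducible_iff_irreducible_map_fraction_map]
  · exact hφ
  · exact hφ.isPrimitive (by rw [hdeg]; exact hf)

/-- `h`-adic expansion. -/
theorem aux_adic (h : ℂ[X]) (hh : 0 < h.natDegree) (q : ℂ[X]) :
    ∃ W : ℂ[X][X], W.degree < h.natDegree ∧ eval₂ (compRingHom h) X W = q := by
  induction hN : q.natDegree using Nat.strong_induction_on generalizing q with
  | _ N ih =>
    have h0 : h ≠ 0 := by rintro rfl; simp at hh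
    have hdm := EuclideanDomain.div_add_mod q h
    have hr : (q % h).degree < h.natDegree := by
      rw [← degree_eq_natDegree h0]; exact EuclideanDomain.mod_lt q h0
    have hev : ∀ a : ℂ[X], eval₂ (compRingHom h) X (a.map C) = a := by
      intro a
      rw [eval₂_map]
      have : (compRingHom h).comp C = C := by ext; simp
      rw [this, eval₂_C_X]
    have hmd : ((q % h).map (C : ℂ →+* ℂ[X])).degree < h.natDegree := by
      rwa [degree_map_eq_of_injective C_injective]
    by_cases hq : q / h = 0
    · refine ⟨(q % h).map C, hmd, ?_⟩
      rw [hev]; rw [hq, mul_zero, zero_add] at hdm; exact hdm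
    · have hlt : (q / h).natDegree < N := by
        rw [← hN]
        have hq0 : q ≠ 0 := by rintro rfl; simp at hq
        exact natDegree_lt_natDegree hq (degree_div_lt hq0 (natDegree_pos_iff_degree_pos.1 hh))
      obtain ⟨W, hW, hWe⟩ := ih _ hlt (q / h) rfl
      refine ⟨C X * W + (q % h).map C, ?_, ?_⟩
      · refine (degree_add_le _ _).trans_lt (max_lt ?_ hmd)
        rwa [degree_C_mul X_ne_zero]
      · rw [eval₂_add, eval₂_mul, hWe, hev, eval₂_C]
        simpa using hdm

/-- integrality: integral elements of `ℂ(y)` lie in `ℂ[y]`. -/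
theorem aux_int {Ω : Type*} [Field Ω] (ψ : ℂ[X] →+* Ω) (hψ : Function.Injective ψ) (u : Ω)
    (hu : ψ.IsIntegralElem u) (a b : ℂ[X]) (hb : b ≠ 0) (hab : u * ψ b = ψ a) :
    ∃ c, u = ψ c := by
  let := ψ.toAlgebra
  have hinj : Function.Injective (algebraMap ℂ[X] Ω) := hψ
  have : FaithfulSMul ℂ[X] Ω := (faithfulSMul_iff_algebraMap_injective _ _).2 hinj
  let : Algebra (RatFunc ℂ) Ω := (IsFractionRing.lift (K := RatFunc ℂ) hinj).toAlgebra
  have : IsScalarTower ℂ[X] (RatFunc ℂ) Ω := IsScalarTower.of_algebraMap_eq (fun x => by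
    simp [RingHom.algebraMap_toAlgebra])
  set r : RatFunc ℂ := algebraMap ℂ[X] _ a / algebraMap ℂ[X] _ b
  have hb' : algebraMap ℂ[X] Ω b ≠ 0 := by
    rwa [Ne, map_eq_zero_iff _ hinj]
  have hr : algebraMap (RatFunc ℂ) Ω r = u := by
    rw [map_div₀, ← IsScalarTower.algebraMap_apply, ← IsScalarTower.algebraMap_apply,
      div_eq_iff hb']
    exact hab.symm
  have hi : IsIntegral ℂ[X] u := hu
  rw [← hr] at hi
  have hi' : IsIntegral ℂ[X] r :=
    (isIntegral_algebraMap_iff (algebraMap (RatFunc ℂ) Ω).injective).1 hi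
  obtain ⟨c, hc⟩ := (IsIntegrallyClosed.isIntegral_iff).1 hi'
  refine ⟨c, ?_⟩
  rw [← hr, ← hc, ← IsScalarTower.algebraMap_apply]; rfl

theorem aux_decomp {Ω : Type*} [Field Ω] [Algebra (RatFunc ℂ) Ω] [Algebra ℂ Ω]
    [IsScalarTower ℂ (RatFunc ℂ) Ω] [FiniteDimensional (RatFunc ℂ) Ω] [IsGalois (RatFunc ℂ) Ω]
    (f : ℂ[X]) (hf : f.natDegree ≠ 0) (r k : ℕ) (hk : 0 < k) (hrk : r * k = f.natDegree)
    (blocks : Fin r → Set Ω) (hdisj : Pairwise (Function.onFun Disjoint blocks))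
    (hun : (⋃ i, blocks i) =
      (f.map (algebraMap ℂ (RatFunc ℂ)) - C RatFunc.X : (RatFunc ℂ)[X]).rootSet Ω)
    (hcard : ∀ i, (blocks i).ncard = k)
    (hst : ∀ σ : Ω ≃ₐ[RatFunc ℂ] Ω, ∀ i, ∃ j, (⇑σ) '' blocks i = blocks j) :
    ∃ g h : ℂ[X], h.natDegree = k ∧ f = g.comp h := by
  classical
  set p : (RatFunc ℂ)[X] := f.map (algebraMap ℂ (RatFunc ℂ)) - C RatFunc.X with hp
  have hirr : Irreducible p := aux_irr f hf
  set x : Ω := algebraMap (RatFunc ℂ) Ω RatFunc.X with hx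
  have hroot : ∀ z, z ∈ p.rootSet Ω ↔ aeval z f = x := by
    intro z
    rw [mem_rootSet, and_iff_right hirr.ne_zero, hp, map_sub, aeval_map_algebraMap, aeval_C,
      sub_eq_zero]
  have hrt : ∀ i, ∀ z ∈ blocks i, aeval z f = x := by
    intro i z hz
    rw [← hroot, ← hun]; exact Set.mem_iUnion_of_mem i hz
  -- transcendence
  have hxaev : ∀ q : ℂ[X], aeval x q = algebraMap (RatFunc ℂ) Ω (algebraMap ℂ[X] (RatFunc ℂ) q) := by
    intro q
    rw [hx, aeval_algebraMap_apply]
    congr 1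
    exact RatFunc.aeval_X_left_eq_algebraMap q
  have hxt : Transcendental ℂ x := by
    rw [transcendental_iff_injective]
    intro a b hab
    simp only [hxaev] at hab
    exact RatFunc.algebraMap_injective ℂ ((algebraMap (RatFunc ℂ) Ω).injective hab)
  have hr0 : 0 < r := by
    rcases Nat.eq_zero_or_pos r with h | h
    · subst h; simp at hrk; omega
    · exact h
  have hfin : ∀ i, (blocks i).Finite := fun i => Set.finite_of_ncard_pos (by rw [hcard]; exact hk)
  set b : Fin r → Finset Ω := fun i => (hfin i).toFinset with hb
  have hmb : ∀ i z, z ∈ b i ↔ z ∈ blocks i := fun i z => by simp [hb]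
  have hbc : ∀ i, (b i).card = k := by
    intro i; rw [← hcard i, Set.ncard_eq_toFinset_card _ (hfin i)]
  let i0 : Fin r := ⟨0, hr0⟩
  obtain ⟨y, hy⟩ : (b i0).Nonempty := by rw [← Finset.card_pos, hbc]; exact hk
  rw [hmb] at hy
  have hyx : aeval y f = x := hrt _ y hy
  have hyt : Transcendental ℂ y := by
    rw [← hyx, transcendental_aeval_iff] at hxt
    exact hxt.1
  -- transitivity
  have htrans : ∀ z w, aeval z f = x → aeval w f = x → ∃ σ : Ω ≃ₐ[RatFunc ℂ] Ω, σ z = w := by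
    intro z w hz hw
    have hz' : aeval z p = 0 := ((mem_rootSet).1 ((hroot z).2 hz)).2
    have hw' : aeval w p = 0 := ((mem_rootSet).1 ((hroot w).2 hw)).2
    have := minpoly.eq_of_irreducible hirr hz'
    refine minpoly.exists_algEquiv_of_root' (Algebra.IsAlgebraic.isAlgebraic z) ?_
    rw [← this, map_mul, hw', zero_mul]
  have hbm : ∀ (σ : Ω ≃ₐ[RatFunc ℂ] Ω) i j z, z ∈ blocks i → σ z ∈ blocks j →
      σ '' blocks i = blocks j := by
    intro σ i j z hz hj
    obtain ⟨j', hj'⟩ := hst σ i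
    by_cases hjj : j' = j
    · rw [hj', hjj]
    · exfalso
      have h1 : σ z ∈ blocks j' := by rw [← hj']; exact ⟨z, hz, rfl⟩
      exact Set.disjoint_left.1 (hdisj hjj) h1 hj
  set U : Fin r → Ω := fun i => ∏ z ∈ b i, z with hU
  have hσU : ∀ (σ : Ω ≃ₐ[RatFunc ℂ] Ω) i j, σ '' blocks i = blocks j → σ (U i) = U j := by
    intro σ i j hij
    have : b j = (b i).image σ := by
      ext z; rw [hmb, ← hij]; simp [hb]
    simp only [hU]
    rw [this, map_prod, Finset.prod_image (fun a _ b _ h => σ.injective h)]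
  -- u lies in K(y)
  have hmem : U i0 ∈ IntermediateField.adjoin (RatFunc ℂ) {y} := by
    rw [← IsGalois.fixedField_fixingSubgroup (IntermediateField.adjoin (RatFunc ℂ) {y}),
      IntermediateField.mem_fixedField_iff]
    intro σ hσ
    rw [IntermediateField.mem_fixingSubgroup_iff] at hσ
    have hσy : σ y = y := hσ y (IntermediateField.mem_adjoin_simple_self _ y)
    exact hσU σ i0 i0 (hbm σ i0 i0 y hy (by rw [hσy]; exact hy))
  set ψ : ℂ[X] →+* Ω := (aeval y : ℂ[X] →ₐ[ℂ] Ω).toRingHom with hψ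
  have hψa : ∀ q, ψ q = aeval y q := fun q => rfl
  have hψi : Function.Injective ψ := transcendental_iff_injective.1 hyt
  let φ : RatFunc ℂ →+* Ω := IsFractionRing.lift hψi
  have hφ : ∀ q, φ (algebraMap ℂ[X] _ q) = ψ q := fun q => IsFractionRing.lift_algebraMap hψi q
  have hK : ∀ s : RatFunc ℂ, algebraMap (RatFunc ℂ) Ω s ∈ φ.fieldRange := by
    intro s
    have hq : ∀ q : ℂ[X], algebraMap (RatFunc ℂ) Ω (algebraMap ℂ[X] _ q) ∈ φ.fieldRange := by
      intro q
      refine ⟨algebraMap ℂ[X] _ (q.comp f), ?_⟩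
      rw [hφ, hψa, aeval_comp, hyx, hxaev]
    rw [← RatFunc.num_div_denom s, map_div₀]
    exact div_mem (hq _) (hq _)
  have hmem' : U i0 ∈ φ.fieldRange := by
    refine IntermediateField.adjoin_induction (RatFunc ℂ) (p := fun v _ => v ∈ φ.fieldRange)
      ?_ hK (fun _ _ _ _ => add_mem) (fun _ _ => inv_mem) (fun _ _ _ _ => mul_mem) hmem
    intro v hv
    rw [Set.mem_singleton_iff] at hv
    subst hv
    exact ⟨algebraMap ℂ[X] _ X, by rw [hφ, hψa, aeval_X]⟩
  -- u is integral over ℂ[y]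
  have hUint : ψ.IsIntegralElem (U i0) := by
    refine Finset.prod_induction _ (fun v => ψ.IsIntegralElem v)
      (fun _ _ => RingHom.IsIntegralElem.mul ψ) (RingHom.isIntegralElem_one ψ) ?_
    intro z hz
    rw [hmb] at hz
    have hzx := hrt _ z hz
    have hf0 : f ≠ 0 := by rintro rfl; simp at hf
    set f1 := C (f.leadingCoeff⁻¹) * f with hf1
    have hm1 : f1.Monic := by
      apply monic_C_mul_of_mul_leadingCoeff_eq_one
      exact inv_mul_cancel₀ (leadingCoeff_ne_zero.2 hf0)
    have hd1 : f1.natDegree = f.natDegree :=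
      natDegree_C_mul (inv_ne_zero (leadingCoeff_ne_zero.2 hf0))
    refine ⟨f1.map C - C f1, ?_, ?_⟩
    · apply (hm1.map C).sub_of_left
      refine degree_C_le.trans_lt ?_
      rw [degree_map_eq_of_injective C_injective, ← natDegree_pos_iff_degree_pos, hd1]
      omega
    · rw [eval₂_sub, eval₂_C, eval₂_map]
      have : ψ.comp C = algebraMap ℂ Ω := by ext c; simp [hψa]
      rw [this, ← aeval_def, hψa, hf1, map_mul, map_mul, hzx, hyx]
      simp
  obtain ⟨h, hh⟩ : ∃ h, U i0 = ψ h := by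
    obtain ⟨s, hs⟩ := hmem'
    refine aux_int ψ hψi _ hUint s.num s.denom s.denom_ne_zero ?_
    rw [← hs, ← hφ, ← hφ, ← map_mul]
    congr 1
    rw [← eq_div_iff, RatFunc.num_div_denom]
    simpa using s.denom_ne_zero
  rw [hψa] at hh
  have hhU : ∀ i, ∀ z ∈ b i, aeval z h = U i := by
    intro i z hz
    rw [hmb] at hz
    obtain ⟨σ, hσ⟩ := htrans y z hyx (hrt _ z hz)
    have := hσU σ i0 i (hbm σ i0 i y hy (by rw [hσ]; exact hz))
    rw [← this, hh, ← hσ]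
    exact aeval_algHom_apply (σ.restrictScalars ℂ) y h
  -- the norm computation
  set S : Finset Ω := Finset.univ.biUnion b with hS
  have hbd : ∀ i ∈ (Finset.univ : Finset (Fin r)), ∀ j ∈ (Finset.univ : Finset (Fin r)), i ≠ j →
      Disjoint (b i) (b j) := by
    intro i _ j _ hij
    rw [Finset.disjoint_left]
    intro z hz hz'
    rw [hmb] at hz hz'
    exact Set.disjoint_left.1 (hdisj hij) hz hz'
  have hScard : S.card = f.natDegree := by
    rw [hS, Finset.card_biUnion hbd, ← hrk]
    simp [hbc]
  have P1 : ∏ z ∈ S, aeval z h = (∏ z ∈ S, z) ^ k := by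
    rw [hS, Finset.prod_biUnion hbd, Finset.prod_biUnion hbd, ← Finset.prod_pow]
    refine Finset.prod_congr rfl fun i _ => ?_
    rw [Finset.prod_congr rfl (hhU i), Finset.prod_const, hbc]
  set q : Polynomial Ω := f.map (algebraMap ℂ Ω) - C x with hq
  have hqd : q.natDegree = f.natDegree := by rw [hq, natDegree_sub_C, natDegree_map]
  have hql : q.leadingCoeff = algebraMap ℂ Ω f.leadingCoeff := by
    rw [leadingCoeff, hqd, hq, coeff_sub, coeff_C, if_neg hf, sub_zero, coeff_map, ← leadingCoeff]
  have hq0 : q ≠ 0 := by rintro h0; rw [h0] at hqd; simp at hqd; omega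
  have hqr : q.roots = S.val := by
    symm
    apply Multiset.eq_of_le_of_card_le
    · rw [Finset.val_le_iff_val_subset]
      intro z hz
      rw [mem_roots hq0, IsRoot, hq, eval_sub, eval_C, eval_map_algebraMap, sub_eq_zero]
      have hz' : z ∈ S := hz
      rw [hS, Finset.mem_biUnion] at hz'
      obtain ⟨i, _, hi⟩ := hz'
      exact hrt i z ((hmb i z).1 hi)
    · refine (card_roots' q).trans ?_
      rw [hqd, ← hScard]; rfl
  have P2 : ∀ c : ℂ, algebraMap ℂ Ω f.leadingCoeff * ∏ z ∈ S, (z - algebraMap ℂ Ω c) =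
      (-1) ^ f.natDegree * (algebraMap ℂ Ω (f.eval c) - x) := by
    intro c
    have h1 := C_leadingCoeff_mul_prod_multiset_X_sub_C (p := q) (by
      rw [hqr, hqd, ← hScard]; rfl)
    have h2 := congrArg (eval (algebraMap ℂ Ω c)) h1
    rw [hqr, hql, eval_mul, eval_C, hq, eval_sub, eval_C, eval_map_algebraMap,
      aeval_algebraMap_apply] at h2
    have h3 : (Multiset.map (fun a => X - C a) S.val).prod = ∏ z ∈ S, (X - C z) := rfl
    rw [h3, eval_prod] at h2
    have h4 : ∏ z ∈ S, (z - algebraMap ℂ Ω c) =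
        (-1) ^ f.natDegree * ∏ z ∈ S, eval (algebraMap ℂ Ω c) (X - C z) := by
      rw [← hScard, ← Finset.prod_const, ← Finset.prod_mul_distrib]
      refine Finset.prod_congr rfl fun z _ => ?_
      simp
    rw [h4, mul_left_comm, h2]
    simp
  have hf0 : f ≠ 0 := by rintro rfl; simp at hf
  have hlc0 : f.leadingCoeff ≠ 0 := leadingCoeff_ne_zero.2 hf0
  set N := f.natDegree with hN
  set E : ℂ → ℂ[X] := fun c => C ((-1) ^ N) * (C (f.eval c) - X) with hE
  have hEd : ∀ c, (E c).natDegree = 1 := by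
    intro c
    rw [hE]
    simp only
    rw [natDegree_C_mul (by simp), ← natDegree_neg, neg_sub, natDegree_X_sub_C]
  have hE0 : ∀ c, E c ≠ 0 := by
    intro c h0; have := hEd c; rw [h0] at this; simp at this
  have hEx : ∀ c, aeval x (E c) = (-1) ^ N * (algebraMap ℂ Ω (f.eval c) - x) := by
    intro c; simp [hE]
  have hxi := transcendental_iff_injective.1 hxt
  have hprod0 : algebraMap ℂ Ω f.leadingCoeff * ∏ z ∈ S, z = aeval x (E 0) := by
    rw [hEx, ← P2]; simp
  have hSne : (∏ z ∈ S, z) ≠ 0 := by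
    intro h0
    rw [h0, mul_zero] at hprod0
    apply hE0 0
    apply hxi
    rw [← hprod0, map_zero]
  have hh0 : h ≠ 0 := by
    rintro rfl
    have hyS : y ∈ S := by
      rw [hS, Finset.mem_biUnion]; exact ⟨i0, Finset.mem_univ _, (hmb _ _).2 hy⟩
    have : ∏ z ∈ S, aeval z (0 : ℂ[X]) = 0 := Finset.prod_eq_zero hyS (map_zero _)
    rw [this] at P1
    exact pow_ne_zero k hSne P1.symm
  have hhl : h.leadingCoeff ≠ 0 := leadingCoeff_ne_zero.2 hh0
  have hhr : h.roots.card = h.natDegree := splits_iff_card_roots.1 (IsAlgClosed.splits h)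
  have P3 : ∀ z : Ω, aeval z h = algebraMap ℂ Ω h.leadingCoeff *
      (h.roots.map (fun c => z - algebraMap ℂ Ω c)).prod := by
    intro z
    conv_lhs => rw [← C_leadingCoeff_mul_prod_multiset_X_sub_C (p := h) hhr]
    rw [map_mul, aeval_C, map_multiset_prod, Multiset.map_map]
    congr 3
    ext c; simp
  have P4 : (algebraMap ℂ Ω f.leadingCoeff) ^ h.natDegree * ∏ z ∈ S, aeval z h =
      (algebraMap ℂ Ω h.leadingCoeff) ^ N * (h.roots.map (fun c => aeval x (E c))).prod := by
    have key : ∀ M : Multiset ℂ, (algebraMap ℂ Ω f.leadingCoeff) ^ M.card *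
        ∏ z ∈ S, (M.map (fun c => z - algebraMap ℂ Ω c)).prod =
        (M.map (fun c => aeval x (E c))).prod := by
      intro M
      induction M using Multiset.induction_on with
      | empty => simp
      | cons c M ih =>
        simp only [Multiset.card_cons, Multiset.map_cons, Multiset.prod_cons]
        rw [Finset.prod_mul_distrib, ← ih, hEx, ← P2]
        ring
    simp only [P3]
    rw [Finset.prod_mul_distrib, Finset.prod_const, hScard, mul_left_comm, ← hhr, key]
  have P5 : aeval x (C (f.leadingCoeff ^ k * h.leadingCoeff ^ N) * (h.roots.map E).prod) =
      aeval x (C (f.leadingCoeff ^ h.natDegree) * (E 0) ^ k) := by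
    simp only [map_mul, map_pow, aeval_C, ← hprod0, mul_pow, ← P1, map_multiset_prod,
      Multiset.map_map, Function.comp_def]
    linear_combination -(algebraMap ℂ Ω f.leadingCoeff) ^ k * P4
  have P6 := congrArg natDegree (hxi P5)
  have hhd : h.natDegree = k := by
    rw [natDegree_C_mul (by simp [hlc0, hhl]), natDegree_C_mul (by simp [hlc0]), natDegree_pow,
      hEd, mul_one, natDegree_multiset_prod _ (by
        simp only [Multiset.mem_map, not_exists, not_and]; intro c _; exact hE0 c),
      Multiset.map_map] at P6
    simpa [Function.comp_def, hEd, hhr] using P6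
  -- conclusion by h-adic expansion
  obtain ⟨W, hW, hWe⟩ := aux_adic h (by omega) f
  have hut : Transcendental ℂ (U i0) := by
    rw [hh]
    exact hyt.aeval h (by omega) (mem_nonZeroDivisors_of_ne_zero hhl)
  set u := U i0 with hu
  let α : ℂ[X] →+* Ω := (aeval u : ℂ[X] →ₐ[ℂ] Ω).toRingHom
  have hαa : ∀ q, α q = aeval u q := fun q => rfl
  have hWz : ∀ z ∈ b i0, eval₂ α z W = x := by
    intro z hz
    have h1 := congrArg (aeval z : ℂ[X] →ₐ[ℂ] Ω).toRingHom hWe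
    rw [hom_eval₂] at h1
    have h2 : ((aeval z : ℂ[X] →ₐ[ℂ] Ω).toRingHom).comp (compRingHom h) = α := by
      apply RingHom.ext
      intro a
      rw [hαa, hu, ← hhU i0 z hz, ← aeval_comp]; rfl
    rw [h2] at h1
    have h3 : (aeval z : ℂ[X] →ₐ[ℂ] Ω).toRingHom X = z := aeval_X z
    rw [h3] at h1
    rw [h1]; exact hrt _ z ((hmb _ _).1 hz)
  have hW0 : W.map α - C x = 0 := by
    apply eq_zero_of_degree_lt_of_eval_finset_eq_zero (s := b i0)
    · rw [hbc, ← hhd]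
      refine (degree_sub_le _ _).trans_lt (max_lt (degree_map_le.trans_lt hW) ?_)
      refine degree_C_le.trans_lt ?_
      exact_mod_cast (by omega : 0 < h.natDegree)
    · intro z hz
      rw [eval_sub, eval_C, eval_map, hWz z hz, sub_self]
  have hWc : W = C (W.coeff 0) := by
    ext1 j
    rw [coeff_C]
    split_ifs with hj
    · rw [hj]
    · have h1 := congrArg (fun P => P.coeff j) hW0
      simp only [coeff_sub, coeff_map, coeff_C, if_neg hj, sub_zero, coeff_zero] at h1
      exact transcendental_iff.1 hut _ h1
  refine ⟨W.coeff 0, h, hhd, ?_⟩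
  rw [hWc, eval₂_C] at hWe
  exact hWe.symm

theorem aux_blocks {Ω : Type*} [Field Ω] [Algebra (RatFunc ℂ) Ω] [Algebra ℂ Ω]
    [IsScalarTower ℂ (RatFunc ℂ) Ω]
    (f g h : ℂ[X]) (r k : ℕ) (hr : 0 < r) (hk : 0 < k) (hgd : g.natDegree = r)
    (hhd : h.natDegree = k) (hfgh : f = g.comp h)
    (hs : ((f.map (algebraMap ℂ (RatFunc ℂ)) - C RatFunc.X).map
      (algebraMap (RatFunc ℂ) Ω)).Splits) :
    ∃ blocks : Fin r → Set Ω, Pairwise (Function.onFun Disjoint blocks) ∧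
      (⋃ i, blocks i) =
        (f.map (algebraMap ℂ (RatFunc ℂ)) - C RatFunc.X : (RatFunc ℂ)[X]).rootSet Ω ∧
      (∀ i, (blocks i).ncard = k) ∧
      (∀ σ : Ω ≃ₐ[RatFunc ℂ] Ω, ∀ i, ∃ j, (⇑σ) '' blocks i = blocks j) := by
  classical
  have hfd : f.natDegree = r * k := by rw [hfgh, natDegree_comp, hgd, hhd]
  have hf : f.natDegree ≠ 0 := by rw [hfd]; positivity
  set p : (RatFunc ℂ)[X] := f.map (algebraMap ℂ (RatFunc ℂ)) - C RatFunc.X with hp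
  have hirr : Irreducible p := aux_irr f hf
  set x : Ω := algebraMap (RatFunc ℂ) Ω RatFunc.X with hx
  have hroot : ∀ z, z ∈ p.rootSet Ω ↔ aeval z f = x := by
    intro z
    rw [mem_rootSet, and_iff_right hirr.ne_zero, hp, map_sub, aeval_map_algebraMap, aeval_C,
      sub_eq_zero]
  have hpd : p.natDegree = r * k := by rw [hp, natDegree_sub_C, natDegree_map, hfd]
  set S : Finset Ω := (p.rootSet Ω).toFinset with hS
  have hmS : ∀ z, z ∈ S ↔ aeval z f = x := by
    intro z; rw [hS, Set.mem_toFinset, hroot]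
  have hScard : S.card = r * k := by
    rw [hS, Set.toFinset_card, card_rootSet_eq_natDegree hirr.separable hs, hpd]
  set Z : Finset Ω := S.image (fun z => aeval z h) with hZ
  have hmZ : ∀ w, w ∈ Z ↔ ∃ z, aeval z f = x ∧ aeval z h = w := by
    intro w; rw [hZ, Finset.mem_image]; simp only [hmS]
  have hbound : ∀ (q : ℂ[X]) (s : ℕ) (w : Ω), 0 < s → q.natDegree = s → ∀ M : Finset Ω,
      (∀ z ∈ M, aeval z q = w) → M.card ≤ s := by
    intro q s w hs0 hq M hM
    have hd : (q.map (algebraMap ℂ Ω) - C w).natDegree = s := by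
      rw [natDegree_sub_C, natDegree_map, hq]
    have h0 : q.map (algebraMap ℂ Ω) - C w ≠ 0 := by
      intro h0; rw [h0] at hd; simp at hd; omega
    rw [← hd]
    refine card_le_degree_of_subset_roots (fun z hz => ?_)
    rw [mem_roots h0, IsRoot, eval_sub, eval_C, eval_map_algebraMap, sub_eq_zero]
    exact hM z hz
  have hZc : Z.card ≤ r := by
    refine hbound g r x hr hgd Z ?_
    intro w hw
    obtain ⟨z, hz, rfl⟩ := (hmZ w).1 hw
    rw [← aeval_comp, ← hfgh, hz]
  have hfib : ∀ w ∈ Z, (S.filter (fun z => aeval z h = w)).card ≤ k := by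
    intro w _
    refine hbound h k w hk hhd _ ?_
    intro z hz
    exact (Finset.mem_filter.1 hz).2
  have hsum : S.card = ∑ w ∈ Z, (S.filter (fun z => aeval z h = w)).card :=
    Finset.card_eq_sum_card_image _ _
  have hsle : ∑ w ∈ Z, (S.filter (fun z => aeval z h = w)).card ≤ ∑ w ∈ Z, k :=
    Finset.sum_le_sum hfib
  have hZr : Z.card = r := by
    rw [← hsum, hScard, Finset.sum_const, smul_eq_mul] at hsle
    exact le_antisymm hZc (Nat.le_of_mul_le_mul_right hsle hk)
  have hfe : ∀ w ∈ Z, (S.filter (fun z => aeval z h = w)).card = k := by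
    rw [← Finset.sum_eq_sum_iff_of_le hfib, ← hsum, hScard, Finset.sum_const, hZr, smul_eq_mul]
  let e : Fin r ≃ Z := (Finset.equivFinOfCardEq hZr).symm
  have hσ : ∀ (σ : Ω ≃ₐ[RatFunc ℂ] Ω) (q : ℂ[X]) z, aeval (σ z) q = σ (aeval z q) :=
    fun σ q z => aeval_algHom_apply (σ.restrictScalars ℂ) z q
  have hσx : ∀ (σ : Ω ≃ₐ[RatFunc ℂ] Ω), σ x = x := fun σ => σ.commutes _
  refine ⟨fun i => {z | aeval z f = x ∧ aeval z h = (e i : Ω)}, ?_, ?_, ?_, ?_⟩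
  · intro i j hij
    rw [Function.onFun, Set.disjoint_left]
    rintro z ⟨_, h1⟩ ⟨_, h2⟩
    exact hij (e.injective (Subtype.ext (h1.symm.trans h2)))
  · ext z
    rw [hroot, Set.mem_iUnion]
    constructor
    · rintro ⟨i, hi⟩; exact hi.1
    · intro hz
      refine ⟨e.symm ⟨aeval z h, (hmZ _).2 ⟨z, hz, rfl⟩⟩, hz, ?_⟩
      simp
  · intro i
    rw [← hfe (e i) (e i).2, ← Set.ncard_coe_finset]
    congr 1
    ext z
    simp [hmS]
  · intro σ i
    obtain ⟨z0, hz0, hz0'⟩ := (hmZ _).1 (e i).2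
    have hw : σ (e i) ∈ Z := (hmZ _).2 ⟨σ z0, by rw [hσ, hz0, hσx], by rw [hσ, hz0']⟩
    refine ⟨e.symm ⟨σ (e i), hw⟩, ?_⟩
    ext z
    simp only [Set.mem_image, Set.mem_setOf_eq, Equiv.apply_symm_apply]
    constructor
    · rintro ⟨z', ⟨h1, h2⟩, rfl⟩
      exact ⟨by rw [hσ, h1, hσx], by rw [hσ, h2]⟩
    · rintro ⟨h1, h2⟩
      refine ⟨σ.symm z, ⟨?_, ?_⟩, by simp⟩
      · apply σ.injective; rw [← hσ, AlgEquiv.apply_symm_apply, h1, hσx]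
      · apply σ.injective; rw [← hσ, AlgEquiv.apply_symm_apply, h2]

theorem stmt9 (d : ℕ) (hd : 2 ≤ d) (D A B : Polynomial ℂ)
    (hD : Squarefree D) (hdeg : D.natDegree = 2*d)
    (hB : B ≠ 0) (hPell : A ^ 2 - D * B ^ 2 = 1)
    (n : ℕ) (hn : A.natDegree = n)
    (m : ℕ) (hm : 1 ≤ m) (hmn : m ∣ n) (hnd : d ≤ n / m) :
    (∃ A' B' : Polynomial ℂ, B' ≠ 0 ∧ A' ^ 2 - D * B' ^ 2 = 1 ∧
        (A = (Polynomial.Chebyshev.T ℂ (m : ℤ)).comp A' ∨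
         A = -((Polynomial.Chebyshev.T ℂ (m : ℤ)).comp A'))) ↔
    (∃ blocks : Fin (2*m) → Set (pellCover A).SplittingField,
        Pairwise (Function.onFun Disjoint blocks) ∧
        (⋃ i, blocks i) = (pellCover A).rootSet (pellCover A).SplittingField ∧
        (∀ i, (blocks i).ncard = n / m) ∧
        (∀ σ : (pellCover A).Gal, ∀ i, ∃ j, (⇑σ) '' blocks i = blocks j)) := by
  obtain ⟨k, rfl⟩ := hmn
  rw [Nat.mul_div_cancel_left k (by omega)] at hnd ⊢
  have hk : 0 < k := by omega
  have hmk : 0 < m * k := Nat.mul_pos hm hk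
  have hf : (A ^ 2).natDegree = 2 * m * k := by rw [natDegree_pow, hn]; ring
  have hf0 : (A ^ 2).natDegree ≠ 0 := by rw [hf]; positivity
  constructor
  · rintro ⟨A', B', _, _, hA⟩
    have hA2 : A ^ 2 = ((Chebyshev.T ℂ (m : ℤ)) ^ 2).comp A' := by
      rw [pow_comp]
      rcases hA with h | h <;> rw [h]
      ring
    have hg : ((Chebyshev.T ℂ (m : ℤ)) ^ 2).natDegree = 2 * m := by
      rw [natDegree_pow, Chebyshev.natDegree_T]; simp
    have hA' : A'.natDegree = k := by
      have := congrArg natDegree hA2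
      rw [hf, natDegree_comp, hg] at this
      exact (Nat.eq_of_mul_eq_mul_left (by omega) this).symm
    exact aux_blocks (Ω := (pellCover A).SplittingField) (A ^ 2) _ A' (2 * m) k (by omega) hk hg hA'
      hA2 (SplittingField.splits (pellCover A))
  · rintro ⟨blocks, h1, h2, h3, h4⟩
    have hirr : Irreducible (pellCover A) := aux_irr _ hf0
    have : IsGalois (RatFunc ℂ) (pellCover A).SplittingField :=
      IsGalois.of_separable_splitting_field hirr.separable
    obtain ⟨g, h, hh, hgh⟩ := aux_decomp (Ω := (pellCover A).SplittingField) (A ^ 2) hf0 (2 * m) k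
      hk hf.symm blocks h1 h2 h3 h4
    exact aux_poly d hd D A B g h hD hdeg hPell m k hm hnd hn hgh hh
end

section
/- Let n ≥ 3. The number of equivalence classes, under simultaneous conjugation by elements of S_{2n}, of admissible 4-tuples (σ0, σ∞, σ1, τ) such that the cycle type of σ1·τ consists of one 3-cycle and n−3 transpositions equals (n−1)(n−2)/2. -/
/-- A 4-tuple `(σ0, σ∞, σ1, τ)` of permutations of `{1,…,2n}` (realized as permutations of `ℕ`
supported on `{1,…,2n}`) is admissible if `σ0·σ∞·σ1·τ = 1`, `σ0` is a product of `n` disjoint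
transpositions (a fixed-point-free involution of `{1,…,2n}`), `σ∞` is a `2n`-cycle, `σ1` is a
product of `n-2` disjoint transpositions, and `τ` is a transposition. -/
def IsAdmissible (n : ℕ) (σ0 σi σ1 τ : Equiv.Perm ℕ) : Prop :=
  σ0 * σi * σ1 * τ = 1 ∧
  σ0 * σ0 = 1 ∧ {x | σ0 x ≠ x} = Set.Icc 1 (2*n) ∧
  σi.IsCycle ∧ {x | σi x ≠ x} = Set.Icc 1 (2*n) ∧
  σ1 * σ1 = 1 ∧ {x | σ1 x ≠ x} ⊆ Set.Icc 1 (2*n) ∧ {x | σ1 x ≠ x}.ncard = 2*(n-2) ∧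
  ∃ a b, a ≠ b ∧ a ∈ Set.Icc 1 (2*n) ∧ b ∈ Set.Icc 1 (2*n) ∧ τ = Equiv.swap a b

/-- `σ` has cycle type consisting of one 3-cycle and `n-3` transpositions. -/
def HasThreeCycleType (n : ℕ) (σ : Equiv.Perm ℕ) : Prop :=
  ∃ a b c π : _, a ≠ b ∧ b ≠ c ∧ a ≠ c ∧ (π : Equiv.Perm ℕ) * π = 1 ∧
    (∀ x, π x ≠ x → x ∉ ({a, b, c} : Set ℕ)) ∧ {x | π x ≠ x}.ncard = 2*(n-3) ∧
    σ = π * (Equiv.swap a b * Equiv.swap b c)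

namespace Tripod

open Equiv

/-- The standard `2n`-cycle. -/
def cyc (n : ℕ) : Perm ℕ where
  toFun x := if 1 ≤ x ∧ x < 2*n then x+1 else if x = 2*n ∧ 1 ≤ n then 1 else x
  invFun x := if 2 ≤ x ∧ x ≤ 2*n then x-1 else if x = 1 ∧ 1 ≤ n then 2*n else x
  left_inv x := by
    simp only
    split_ifs <;> omega
  right_inv x := by
    simp only
    split_ifs <;> omega

lemma cyc_apply (n x : ℕ) : cyc n x =
    if 1 ≤ x ∧ x < 2*n then x+1 else if x = 2*n ∧ 1 ≤ n then 1 else x := rfl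

lemma cyc_inv_apply (n x : ℕ) : (cyc n)⁻¹ x =
    if 2 ≤ x ∧ x ≤ 2*n then x-1 else if x = 1 ∧ 1 ≤ n then 2*n else x := rfl

/-- Reversal of the interval `(l, r]`. -/
def rev (l r : ℕ) : Perm ℕ :=
  Function.Involutive.toPerm (fun x => if l < x ∧ x ≤ r then l + r + 1 - x else x) (by
    intro x
    simp only
    split_ifs <;> omega)

lemma rev_apply (l r x : ℕ) : rev l r x = if l < x ∧ x ≤ r then l + r + 1 - x else x := rfl

/-- The standard matching. -/
def mat (n p k : ℕ) : Perm ℕ := rev 0 (2*p) * rev (2*p) (2*k) * rev (2*k) (2*n)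

lemma mat_apply {n p k : ℕ} (h1 : p < k) (h2 : k < n) (x : ℕ) : mat n p k x =
    if 1 ≤ x ∧ x ≤ 2*p then 2*p+1-x else if 2*p < x ∧ x ≤ 2*k then 2*p+2*k+1-x else
    if 2*k < x ∧ x ≤ 2*n then 2*k+2*n+1-x else x := by
  simp only [mat, Perm.mul_apply, rev_apply]
  split_ifs <;> omega

def tra (n p : ℕ) : Perm ℕ := swap (2*p) (2*n)

def sig (n p k : ℕ) : Perm ℕ := (cyc n)⁻¹ * mat n p k * tra n p

lemma mat_sq {n p k : ℕ} (h1 : p < k) (h2 : k < n) : mat n p k * mat n p k = 1 := by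
  ext x
  simp only [Perm.mul_apply, Perm.one_apply, mat_apply h1 h2]
  split_ifs <;> omega

lemma tra_apply (n p x : ℕ) : tra n p x = if x = 2*p then 2*n else if x = 2*n then 2*p else x := by
  simp [tra, swap_apply_def]

lemma rho_apply {n p k : ℕ} (h0 : 1 ≤ p) (h1 : p < k) (h2 : k < n) (x : ℕ) :
    (cyc n)⁻¹ (mat n p k x) =
    if 1 ≤ x ∧ x < 2*p then 2*p-x else if x = 2*p then 2*n else
    if 2*p < x ∧ x < 2*k then 2*p+2*k-x else if x = 2*k then 2*p else
    if 2*k < x ∧ x < 2*n then 2*k+2*n-x else if x = 2*n then 2*k else x := by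
  rw [mat_apply h1 h2, cyc_inv_apply]
  split_ifs <;> omega

lemma sig_apply {n p k : ℕ} (h0 : 1 ≤ p) (h1 : p < k) (h2 : k < n) (x : ℕ) : sig n p k x =
    if 1 ≤ x ∧ x < 2*p then 2*p-x else if x = 2*p then 2*k else
    if 2*p < x ∧ x < 2*k then 2*p+2*k-x else if x = 2*k then 2*p else
    if 2*k < x ∧ x < 2*n then 2*k+2*n-x else x := by
  simp only [sig, Perm.mul_apply]
  rw [tra_apply, rho_apply h0 h1 h2]
  split_ifs <;> omega

lemma cyc_isCycle {n : ℕ} (hn : 1 ≤ n) : (cyc n).IsCycle := by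
  refine ⟨1, ?_, ?_⟩
  · rw [cyc_apply]; split_ifs <;> omega
  · intro y hy
    have hy2 : 1 ≤ y ∧ y ≤ 2*n := by
      rw [cyc_apply] at hy
      split_ifs at hy <;> omega
    have key : ∀ j, j + 1 ≤ 2*n → ((cyc n)^j) 1 = j+1 := by
      intro j
      induction j with
      | zero => intro _; rfl
      | succ j ih =>
        intro hj
        rw [pow_succ', Perm.mul_apply, ih (by omega), cyc_apply]
        split_ifs <;> omega
    refine ⟨((y-1 : ℕ) : ℤ), ?_⟩
    rw [zpow_natCast, key _ (by omega)]
    omega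

set_option maxHeartbeats 4000000 in
lemma std_admissible {n p k : ℕ} (h0 : 1 ≤ p) (h1 : p < k) (h2 : k < n) :
    IsAdmissible n (mat n p k) (cyc n) (sig n p k) (tra n p) := by
  refine ⟨?_, mat_sq h1 h2, ?_, cyc_isCycle (by omega), ?_, ?_, ?_, ?_, 2*p, 2*n, by omega, ?_, ?_, rfl⟩
  · have h := mat_sq h1 h2
    have h' : tra n p * tra n p = 1 := swap_mul_self _ _
    calc _ = mat n p k * mat n p k * (tra n p * tra n p) := by simp only [sig]; group
      _ = 1 := by rw [h, h', one_mul]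
  · ext x
    simp only [Set.mem_ofPred_eq, mat_apply h1 h2, Set.mem_Icc]
    split_ifs <;> omega
  · ext x
    simp only [Set.mem_ofPred_eq, cyc_apply, Set.mem_Icc]
    split_ifs <;> omega
  · ext x
    simp only [Perm.mul_apply, Perm.one_apply, sig_apply h0 h1 h2]
    split_ifs <;> omega
  · intro x
    simp only [Set.mem_ofPred_eq, sig_apply h0 h1 h2, Set.mem_Icc]
    split_ifs <;> omega
  · have : {x | sig n p k x ≠ x} =
        ((Finset.Icc 1 (2*n) \ {p, p+k, k+n, 2*n} : Finset ℕ) : Set ℕ) := by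
      ext x
      simp only [Set.mem_ofPred_eq, sig_apply h0 h1 h2, Finset.coe_sdiff, Set.mem_sdiff,
        Finset.coe_Icc, Set.mem_Icc, Finset.mem_coe, Finset.mem_insert, Finset.mem_singleton]
      split_ifs <;> omega
    rw [this, Set.ncard_coe_finset, Finset.card_sdiff_of_subset]
    · have : ({p, p+k, k+n, 2*n} : Finset ℕ).card = 4 := by
        rw [Finset.card_insert_of_notMem, Finset.card_insert_of_notMem,
          Finset.card_insert_of_notMem, Finset.card_singleton] <;>
        simp only [Finset.mem_insert, Finset.mem_singleton] <;> omega
      rw [this, Nat.card_Icc]; omega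
    · intro x
      simp only [Finset.mem_insert, Finset.mem_singleton, Finset.mem_Icc]
      omega
  · simp only [Set.mem_Icc]; omega
  · simp only [Set.mem_Icc]; omega

/-- The involution part of the standard `ρ`. -/
def invo (n p k : ℕ) : Perm ℕ := rev 0 (2*p-1) * rev (2*p) (2*k-1) * rev (2*k) (2*n-1)

lemma invo_apply {n p k : ℕ} (h0 : 1 ≤ p) (h1 : p < k) (h2 : k < n) (x : ℕ) : invo n p k x =
    if 1 ≤ x ∧ x < 2*p then 2*p-x else
    if 2*p < x ∧ x < 2*k then 2*p+2*k-x else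
    if 2*k < x ∧ x < 2*n then 2*k+2*n-x else x := by
  simp only [invo, Perm.mul_apply, rev_apply]
  split_ifs <;> omega

set_option maxHeartbeats 4000000 in
lemma std_three {n p k : ℕ} (h0 : 1 ≤ p) (h1 : p < k) (h2 : k < n) :
    HasThreeCycleType n (sig n p k * tra n p) := by
  refine ⟨2*p, 2*n, 2*k, invo n p k, by omega, by omega, by omega, ?_, ?_, ?_, ?_⟩
  · ext x
    simp only [Perm.mul_apply, Perm.one_apply, invo_apply h0 h1 h2]
    split_ifs <;> omega
  · intro x
    simp only [invo_apply h0 h1 h2, Set.mem_insert_iff, Set.mem_singleton_iff]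
    split_ifs <;> omega
  · have : {x | invo n p k x ≠ x} =
        ((Finset.Icc 1 (2*n) \ {p, p+k, k+n, 2*n, 2*p, 2*k} : Finset ℕ) : Set ℕ) := by
      ext x
      simp only [Set.mem_ofPred_eq, invo_apply h0 h1 h2, Finset.coe_sdiff, Set.mem_sdiff,
        Finset.coe_Icc, Set.mem_Icc, Finset.mem_coe, Finset.mem_insert, Finset.mem_singleton]
      split_ifs <;> omega
    rw [this, Set.ncard_coe_finset]
    have hsub : ({p, p+k, k+n, 2*n, 2*p, 2*k} : Finset ℕ) ⊆ Finset.Icc 1 (2*n) := by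
      intro x
      simp only [Finset.mem_insert, Finset.mem_singleton, Finset.mem_Icc]
      omega
    have hc : ({p, p+k, k+n, 2*n, 2*p, 2*k} : Finset ℕ).card = 6 := by
      rw [Finset.card_insert_of_notMem, Finset.card_insert_of_notMem,
        Finset.card_insert_of_notMem, Finset.card_insert_of_notMem,
        Finset.card_insert_of_notMem, Finset.card_singleton] <;>
      simp only [Finset.mem_insert, Finset.mem_singleton] <;> omega
    rw [Finset.card_sdiff_of_subset hsub, hc, Nat.card_Icc]
    omega
  · ext x
    simp only [Perm.mul_apply, sig_apply h0 h1 h2, tra_apply, swap_apply_def]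
    rw [invo_apply h0 h1 h2]
    split_ifs <;> omega

/-- `ρ` acts as `x → y → z → x` and as an involution elsewhere. -/
def Three (ρ : Perm ℕ) (x y z : ℕ) : Prop :=
  x ≠ y ∧ y ≠ z ∧ x ≠ z ∧ ρ x = y ∧ ρ y = z ∧ ρ z = x ∧
    ∀ w, w ≠ x → w ≠ y → w ≠ z → ρ (ρ w) = w

lemma Three.rot {ρ : Perm ℕ} {x y z : ℕ} (h : Three ρ x y z) : Three ρ y z x := by
  obtain ⟨h1, h2, h3, h4, h5, h6, h7⟩ := h
  exact ⟨h2, h3.symm, h1.symm, h5, h6, h4, fun w a b c => h7 w c a b⟩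

lemma Three.conj {ρ : Perm ℕ} {x y z : ℕ} (h : Three ρ x y z) (γ : Perm ℕ) :
    Three (γ⁻¹ * ρ * γ) (γ⁻¹ x) (γ⁻¹ y) (γ⁻¹ z) := by
  obtain ⟨h1, h2, h3, h4, h5, h6, h7⟩ := h
  refine ⟨by simpa, by simpa, by simpa, by simp [h4], by simp [h5], by simp [h6], ?_⟩
  intro w a b c
  have := h7 (γ w) (fun e => a (by simp [← e])) (fun e => b (by simp [← e]))
    (fun e => c (by simp [← e]))
  simp [this]

lemma three_of_type {n : ℕ} {σ : Perm ℕ} (h : HasThreeCycleType n σ) :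
    ∃ x y z, Three σ x y z := by
  obtain ⟨a, b, c, π, hab, hbc, hac, hπ, hd, -, rfl⟩ := h
  have hfix : ∀ x, x = a ∨ x = b ∨ x = c → π x = x := by
    intro x hx
    by_contra hne
    exact hd x hne (by simpa using hx)
  have ha := hfix a (by simp)
  have hb := hfix b (by simp)
  have hc := hfix c (by simp)
  have hinv : ∀ x, π (π x) = x := fun x => by
    rw [← Perm.mul_apply, hπ]; rfl
  refine ⟨a, b, c, hab, hbc, hac, ?_, ?_, ?_, ?_⟩
  · simp [swap_apply_def, *]
  · simp [swap_apply_def, *, Ne.symm]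
  · simp [swap_apply_def, *, Ne.symm]
  · intro w wa wb wc
    have h1 : swap a b (swap b c w) = w := by
      rw [swap_apply_of_ne_of_ne wb wc, swap_apply_of_ne_of_ne wa wb]
    have h2 : ∀ t, t = a ∨ t = b ∨ t = c → π w ≠ t := by
      intro t ht e
      have := hinv w
      rw [e, hfix t ht] at this
      grind
    have h3 : swap a b (swap b c (π w)) = π w := by
      rw [swap_apply_of_ne_of_ne (h2 _ (by simp)) (h2 _ (by simp)),
        swap_apply_of_ne_of_ne (h2 _ (by simp)) (h2 _ (by simp))]
    simp only [Perm.mul_apply, h1, h3, hinv]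

lemma tau_in {ρ : Perm ℕ} {x y z a b : ℕ} (h : Three ρ x y z) (hab : a ≠ b)
    (hs : ∀ w, ρ (swap a b (ρ (swap a b w))) = w) :
    swap a b = swap x y ∨ swap a b = swap y z ∨ swap a b = swap z x := by
  obtain ⟨h1, h2, h3, h4, h5, h6, h7⟩ := h
  have hin : ∀ a b : ℕ, a ≠ b → (∀ w, ρ (swap a b (ρ (swap a b w))) = w) →
      (a = x ∨ a = y ∨ a = z) → (b = x ∨ b = y ∨ b = z) := by
    intro a b hab hs ha
    by_contra hb
    push Not at hb
    have e := hs a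
    rw [swap_apply_left] at e
    have e7 := h7 b hb.1 hb.2.1 hb.2.2
    have n1 : ρ b ≠ x := fun e' => by rw [e'] at e7; grind
    have n2 : ρ b ≠ y := fun e' => by rw [e'] at e7; grind
    have n3 : ρ b ≠ z := fun e' => by rw [e'] at e7; grind
    rw [swap_apply_def] at e
    split_ifs at e <;> grind
  by_cases ha : a = x ∨ a = y ∨ a = z
  · have hb := hin a b hab hs ha
    rcases ha with rfl | rfl | rfl <;> rcases hb with rfl | rfl | rfl <;>
      simp_all [swap_comm]
  · have hb : ¬ (b = x ∨ b = y ∨ b = z) := fun hb =>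
      ha (hin b a hab.symm (by simpa only [swap_comm b a] using hs) hb)
    push Not at ha hb
    have e := hs x
    rw [swap_apply_of_ne_of_ne ha.1.symm hb.1.symm, h4,
      swap_apply_of_ne_of_ne ha.2.1.symm hb.2.1.symm, h5] at e
    exact absurd e h3.symm

/-- Propagation along an interval. -/
lemma prop {n : ℕ} {s : Perm ℕ} {l r w : ℕ} (hr : r ≤ 2*n) (hw : 1 ≤ w)
    (hstep : ∀ x, l < x → x < r → s (x+1) = (cyc n)⁻¹ (s x)) (hsr : s r = w) :
    ∀ j, j < r - l → w + j ≤ 2*n → s (r - j) = w + j := by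
  intro j
  induction j with
  | zero => intro _ _; simpa using hsr
  | succ j ih =>
    intro hj hwj
    have e := ih (by omega) (by omega)
    have e2 := hstep (r - (j+1)) (by omega) (by omega)
    rw [show r - (j+1) + 1 = r - j by omega, e] at e2
    have e3 : s (r - (j+1)) = cyc n (w + j) := by rw [e2]; simp
    rw [e3, cyc_apply, if_pos (by omega)]
    rfl

lemma block {n : ℕ} {s : Perm ℕ} {l r : ℕ} (hlr : l < r) (hr : r ≤ 2*n)
    (hstep : ∀ x, l < x → x < r → s (x+1) = (cyc n)⁻¹ (s x)) (hsr : s r = l + 1)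
    (hfix : ∀ x, 1 ≤ x → x ≤ 2*n → s x ≠ x) :
    (∀ x, l < x → x ≤ r → s x = l + r + 1 - x) ∧ (l + r) % 2 = 0 := by
  have h1 : ∀ x, l < x → x ≤ r → s x = l + r + 1 - x := by
    intro x hx hx2
    have := prop hr (by omega) hstep hsr (r - x) (by omega) (by omega)
    rw [show r - (r - x) = x by omega] at this
    omega
  refine ⟨h1, ?_⟩
  by_contra hodd
  have := h1 ((l + r + 1)/2) (by omega) (by omega)
  exact hfix _ (by omega) (by omega) (this.trans (by omega))

lemma classify {n : ℕ} {s : Perm ℕ} {x z : ℕ} (hn : 1 ≤ n) (hs : s * s = 1)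
    (hsupp : {x | s x ≠ x} = Set.Icc 1 (2*n))
    (h : Three ((cyc n)⁻¹ * s) x (2*n) z) :
    ∃ p k, 1 ≤ p ∧ p < k ∧ k < n ∧ s = mat n p k ∧ x = 2*p := by
  have hfix : ∀ x, 1 ≤ x → x ≤ 2*n → s x ≠ x := by
    intro x h1 h2
    have : x ∈ {x | s x ≠ x} := by rw [hsupp]; exact ⟨h1, h2⟩
    exact this
  have hfix' : ∀ x, ¬ (1 ≤ x ∧ x ≤ 2*n) → s x = x := by
    intro x h1
    by_contra h2
    have : x ∈ {x | s x ≠ x} := h2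
    rw [hsupp] at this
    exact h1 this
  have hinv : ∀ x, s (s x) = x := fun x => by
    rw [← Perm.mul_apply, hs]; rfl
  obtain ⟨h1, h2, h3, h4, h5, h6, h7⟩ := h
  simp only [Perm.mul_apply] at h4 h5 h6 h7
  have hfixall : ∀ w, ¬ (1 ≤ w ∧ w ≤ 2*n) → (cyc n)⁻¹ (s w) = w := by
    intro w hw
    rw [hfix' w hw, cyc_inv_apply]
    split_ifs <;> omega
  have hx : 1 ≤ x ∧ x ≤ 2*n := by
    by_contra hc
    exact h1 ((hfixall x hc).symm.trans h4)
  have hz : 1 ≤ z ∧ z ≤ 2*n := by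
    by_contra hc
    exact h3 (h6.symm.trans (hfixall z hc))
  have s4 : s x = 1 := by
    have : s x = cyc n (2*n) := by rw [← h4]; simp
    rw [this, cyc_apply]; split_ifs <;> omega
  have s5 : s (2*n) = z+1 := by
    have : s (2*n) = cyc n z := by rw [← h5]; simp
    rw [this, cyc_apply]; split_ifs <;> omega
  have s6 : s z = x+1 := by
    have : s z = cyc n x := by rw [← h6]; simp
    rw [this, cyc_apply]; split_ifs <;> omega
  have hstep : ∀ w, 1 ≤ w → w < 2*n → w ≠ x → w ≠ z → s (w+1) = (cyc n)⁻¹ (s w) := by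
    intro w hw1 hw2 hwx hwz
    have e := h7 w hwx (by omega) hwz
    have e2 : s ((cyc n)⁻¹ (s w)) = cyc n w := by
      conv_rhs => rw [← e]
      simp
    rw [cyc_apply, if_pos ⟨hw1, hw2⟩] at e2
    rw [← e2, hinv]
  rcases lt_or_gt_of_ne h3 with hxz | hxz
  · have b1 := block (l := 0) (r := x) (by omega) (by omega)
      (fun w a b => hstep w (by omega) (by omega) (by omega) (by omega)) (by simpa using s4) hfix
    have b2 := block (l := x) (r := z) (by omega) (by omega)
      (fun w a b => hstep w (by omega) (by omega) (by omega) (by omega)) s6 hfix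
    have b3 := block (l := z) (r := 2*n) (by omega) (by omega)
      (fun w a b => hstep w (by omega) (by omega) (by omega) (by omega)) s5 hfix
    refine ⟨x/2, z/2, by omega, by omega, by omega, ?_, by omega⟩
    ext w
    rw [mat_apply (by omega) (by omega)]
    have ex : 2*(x/2) = x := by omega
    have ez : 2*(z/2) = z := by omega
    rw [ex, ez]
    split_ifs with c1 c2 c3
    · rw [b1.1 w (by omega) (by omega)]; omega
    · exact b2.1 w (by omega) (by omega)
    · exact b3.1 w (by omega) (by omega)
    · exact hfix' w (by omega)
  · exfalso
    have P := prop (n := n) (s := s) (l := 0) (r := z) (w := x+1) (by omega) (by omega)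
      (fun w a b => hstep w (by omega) (by omega) (by omega) (by omega)) s6
    by_cases hc : z - 1 < 2*n - x - 1
    · have e := P (z-1) (by omega) (by omega)
      rw [show z - (z-1) = 1 by omega] at e
      have e2 := hinv x
      rw [s4] at e2
      omega
    · have e := P (2*n - x - 1) (by omega) (by omega)
      rw [show x + 1 + (2*n - x - 1) = 2*n by omega] at e
      have e2 := hinv (z - (2*n - x - 1))
      rw [e, s5] at e2
      omega

lemma normalize {n : ℕ} {σ : Perm ℕ} (hn : 1 ≤ n) (hc : σ.IsCycle)
    (hsupp : {x | σ x ≠ x} = Set.Icc 1 (2*n)) {m : ℕ} (hm : m ∈ Set.Icc 1 (2*n)) :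
    ∃ γ : Perm ℕ, {x | γ x ≠ x} ⊆ Set.Icc 1 (2*n) ∧ γ⁻¹ * σ * γ = cyc n ∧ γ (2*n) = m := by
  have hco : σ.IsCycleOn ((Finset.Icc 1 (2*n) : Finset ℕ) : Set ℕ) := by
    have := hc.isCycleOn
    rw [hsupp] at this
    simpa using this
  have hm' : m ∈ Finset.Icc 1 (2*n) := by simpa using hm
  have hcard : (Finset.Icc 1 (2*n)).card = 2*n := by simp
  have hpow : (σ^(2*n)) m = m := by
    have := hco.pow_card_apply hm'
    rwa [hcard] at this
  have hmem : ∀ j : ℕ, (σ^j) m ∈ Set.Icc 1 (2*n) := by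
    intro j
    have := (hco.1.perm_pow j).mapsTo (by simpa using hm')
    simpa using this
  have hfixo : ∀ x, ¬ (1 ≤ x ∧ x ≤ 2*n) → σ x = x := by
    intro x h1
    by_contra h2
    have : x ∈ {x | σ x ≠ x} := h2
    rw [hsupp] at this
    exact h1 this
  let f : ℕ → ℕ := fun k => if 1 ≤ k ∧ k ≤ 2*n then (σ^k) m else k
  have hf1 : ∀ k, 1 ≤ k ∧ k ≤ 2*n → f k = (σ^k) m := fun k hk => if_pos hk
  have hf2 : ∀ k, ¬ (1 ≤ k ∧ k ≤ 2*n) → f k = k := fun k hk => if_neg hk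
  have hinj : Function.Injective f := by
    intro a b hab
    by_cases ha : 1 ≤ a ∧ a ≤ 2*n <;> by_cases hb : 1 ≤ b ∧ b ≤ 2*n
    · rw [hf1 a ha, hf1 b hb, hco.pow_apply_eq_pow_apply hm', hcard] at hab
      have hab' : a % (2*n) = b % (2*n) := hab
      rcases eq_or_lt_of_le ha.2 with e1 | e1 <;> rcases eq_or_lt_of_le hb.2 with e2 | e2
      · omega
      · rw [e1, Nat.mod_self, Nat.mod_eq_of_lt e2] at hab'; omega
      · rw [e2, Nat.mod_self, Nat.mod_eq_of_lt e1] at hab'; omega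
      · rwa [Nat.mod_eq_of_lt e1, Nat.mod_eq_of_lt e2] at hab'
    · rw [hf1 a ha, hf2 b hb] at hab
      exact absurd (hab ▸ hmem a) hb
    · rw [hf2 a ha, hf1 b hb] at hab
      exact absurd (hab.symm ▸ hmem b) ha
    · rwa [hf2 a ha, hf2 b hb] at hab
  have hsurj : Function.Surjective f := by
    intro y
    by_cases hy : 1 ≤ y ∧ y ≤ 2*n
    · obtain ⟨j, hj, e⟩ := hco.exists_pow_eq hm' (by simpa using hy : y ∈ Finset.Icc 1 (2*n))
      rw [hcard] at hj
      rcases Nat.eq_zero_or_pos j with h0 | h0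
      · refine ⟨2*n, ?_⟩
        rw [hf1 _ (by omega), hpow, ← e, h0]; rfl
      · exact ⟨j, by rw [hf1 _ (by omega), e]⟩
    · exact ⟨y, hf2 y hy⟩
  obtain ⟨g, hg⟩ : ∃ g : Perm ℕ, ∀ x, g x = f x :=
    ⟨Equiv.ofBijective f ⟨hinj, hsurj⟩, fun _ => rfl⟩
  refine ⟨g, ?_, ?_, ?_⟩
  · intro x hx
    by_contra h
    exact hx ((hg x).trans (hf2 x h))
  · rw [mul_assoc, inv_mul_eq_iff_eq_mul]
    ext x
    simp only [Perm.mul_apply, hg]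
    rw [cyc_apply]
    split_ifs with c1 c2
    · rw [hf1 x (by omega), hf1 _ (by omega), pow_succ', Perm.mul_apply]
    · rw [c2.1, hf1 _ (by omega), hf1 _ (by omega), hpow, pow_one]
    · rw [hf2 x (by omega), hfixo x (by omega)]
  · rw [hg, hf1 _ (by omega), hpow]

abbrev Q := Perm ℕ × Perm ℕ × Perm ℕ × Perm ℕ

/-- The conjugacy class of a tuple. -/
def cls (n : ℕ) (σ0 σi σ1 τ : Perm ℕ) : Set Q :=
  {p | ∃ γ : Equiv.Perm ℕ, {x | γ x ≠ x} ⊆ Set.Icc 1 (2*n) ∧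
          p = (γ⁻¹ * σ0 * γ, γ⁻¹ * σi * γ, γ⁻¹ * σ1 * γ, γ⁻¹ * τ * γ)}

lemma supp_mul {S : Set ℕ} {γ δ : Perm ℕ} (h : {x | γ x ≠ x} ⊆ S) (h' : {x | δ x ≠ x} ⊆ S) :
    {x | (γ * δ) x ≠ x} ⊆ S := by
  intro x hx
  by_contra hn
  have h1 : γ x = x := by by_contra e; exact hn (h e)
  have h2 : δ x = x := by by_contra e; exact hn (h' e)
  exact hx (by rw [Perm.mul_apply, h2, h1])

lemma supp_inv {S : Set ℕ} {γ : Perm ℕ} (h : {x | γ x ≠ x} ⊆ S) :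
    {x | γ⁻¹ x ≠ x} ⊆ S := by
  intro x hx
  apply h
  intro e
  apply hx
  rw [Perm.inv_eq_iff_eq, e]

lemma cls_conj {n : ℕ} {σ0 σi σ1 τ γ : Perm ℕ} (h : {x | γ x ≠ x} ⊆ Set.Icc 1 (2*n)) :
    cls n (γ⁻¹ * σ0 * γ) (γ⁻¹ * σi * γ) (γ⁻¹ * σ1 * γ) (γ⁻¹ * τ * γ) = cls n σ0 σi σ1 τ := by
  ext p
  constructor
  · rintro ⟨δ, hδ, rfl⟩
    refine ⟨γ * δ, supp_mul h hδ, ?_⟩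
    simp only [mul_inv_rev, mul_assoc]
  · rintro ⟨δ, hδ, rfl⟩
    refine ⟨γ⁻¹ * δ, supp_mul (supp_inv h) hδ, ?_⟩
    simp only [mul_inv_rev, mul_assoc, inv_inv, mul_inv_cancel_left]

lemma to_std {n : ℕ} (hn : 3 ≤ n) {σ0 σi σ1 τ : Perm ℕ} (h : IsAdmissible n σ0 σi σ1 τ)
    (h3 : HasThreeCycleType n (σ1 * τ)) :
    ∃ p k, 1 ≤ p ∧ p < k ∧ k < n ∧
      cls n σ0 σi σ1 τ = cls n (mat n p k) (cyc n) (sig n p k) (tra n p) := by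
  obtain ⟨hprod, hs, hs', hcy, hcy', h1, -, -, a, b, hab, ha, hb, hτ⟩ := h
  obtain ⟨x, y, z, hT⟩ := three_of_type h3
  have hττ : τ * τ = 1 := by rw [hτ]; exact swap_mul_self _ _
  have hinv : ∀ w, (σ1 * τ) (swap a b ((σ1 * τ) (swap a b w))) = w := by
    intro w
    have e : (σ1 * τ * τ) * (σ1 * τ * τ) = 1 := by
      rw [mul_assoc σ1, hττ, mul_one, h1]
    have := congrArg (fun g : Perm ℕ => g w) e
    rw [← hτ]
    simpa using this
  have hmain : ∃ x y z, Three (σ1 * τ) x y z ∧ τ = swap x y := by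
    rcases tau_in hT hab hinv with e | e | e
    · exact ⟨x, y, z, hT, hτ.trans e⟩
    · exact ⟨y, z, x, hT.rot, hτ.trans e⟩
    · exact ⟨z, x, y, hT.rot.rot, hτ.trans e⟩
  clear hT
  obtain ⟨x, y, z, hT, hτ'⟩ := hmain
  have hy : y ∈ Set.Icc 1 (2*n) := by
    have e : τ y ≠ y := by rw [hτ', swap_apply_right]; exact hT.1
    rw [hτ] at e
    by_contra hc
    exact e (swap_apply_of_ne_of_ne (fun e => hc (e ▸ ha)) (fun e => hc (e ▸ hb)))
  obtain ⟨γ, hγ, hγc, hγm⟩ := normalize (by omega) hcy hcy' hy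
  have hγy : γ⁻¹ y = 2*n := by rw [Perm.inv_eq_iff_eq, hγm]
  have hrho : γ⁻¹ * (σ1 * τ) * γ = (cyc n)⁻¹ * (γ⁻¹ * σ0 * γ) := by
    have e : σ1 * τ = σi⁻¹ * σ0⁻¹ := by
      rw [mul_assoc (σ0 * σi)] at hprod
      rw [← mul_inv_rev]
      exact (inv_eq_of_mul_eq_one_right hprod).symm
    have e0 : σ0⁻¹ = σ0 := inv_eq_of_mul_eq_one_right hs
    rw [← hγc, e, e0]
    group
  have hT' := hT.conj γ
  rw [hrho, hγy] at hT'
  have hs2 : (γ⁻¹ * σ0 * γ) * (γ⁻¹ * σ0 * γ) = 1 := by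
    calc _ = γ⁻¹ * (σ0 * σ0) * γ := by group
      _ = 1 := by rw [hs]; group
  have hγmem : ∀ w, γ w ∈ Set.Icc 1 (2*n) ↔ w ∈ Set.Icc 1 (2*n) := by
    intro w
    by_cases hw : γ w = w
    · rw [hw]
    · refine ⟨fun _ => hγ hw, fun _ => hγ (fun e => hw (γ.injective e))⟩
  have hsupp : {x | (γ⁻¹ * σ0 * γ) x ≠ x} = Set.Icc 1 (2*n) := by
    ext w
    rw [← hγmem w, ← hs']
    simp only [Set.mem_ofPred_eq, Perm.mul_apply, ne_eq, Perm.inv_eq_iff_eq]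
  obtain ⟨p, k, h0, hpk, hkn, e1, e2⟩ := classify (by omega) hs2 hsupp hT'
  refine ⟨p, k, h0, hpk, hkn, ?_⟩
  have eτ : γ⁻¹ * τ * γ = tra n p := by
    rw [hτ', tra, ← e2, ← hγy]
    have := swap_mul_eq_mul_swap γ⁻¹ x y
    have h := mul_swap_eq_swap_mul γ⁻¹ x y
    rw [h]; group
  have eσ : γ⁻¹ * σ1 * γ = sig n p k := by
    have h' : γ⁻¹ * σ1 * γ = γ⁻¹ * (σ1 * τ) * γ * (γ⁻¹ * τ * γ) := by
      calc γ⁻¹ * σ1 * γ = γ⁻¹ * σ1 * (τ * τ) * γ := by rw [hττ, mul_one]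
        _ = _ := by group
    rw [h', hrho, eτ, e1, sig]
  rw [← cls_conj hγ, e1, hγc, eσ, eτ]

set_option maxHeartbeats 4000000 in
lemma std_inj {n p k p' k' : ℕ} (h0 : 1 ≤ p) (h1 : p < k) (h2 : k < n)
    (h0' : 1 ≤ p') (h1' : p' < k') (h2' : k' < n)
    (h : cls n (mat n p k) (cyc n) (sig n p k) (tra n p) =
      cls n (mat n p' k') (cyc n) (sig n p' k') (tra n p')) : p = p' ∧ k = k' := by
  have hm : (mat n p' k', cyc n, sig n p' k', tra n p') ∈
      cls n (mat n p k) (cyc n) (sig n p k) (tra n p) := by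
    rw [h]
    exact ⟨1, by simp, by simp⟩
  obtain ⟨γ, hγ, e⟩ := hm
  simp only [Prod.mk.injEq] at e
  obtain ⟨e1, e2, e3, e4⟩ := e
  have comm : ∀ {f g : Perm ℕ}, g = γ⁻¹ * f * γ → ∀ x, γ (g x) = f (γ x) := by
    intro f g hfg x
    rw [hfg]; simp
  have c2 := comm e2
  have c3 := comm e3 (2*n)
  have c4 := comm e4 (2*n)
  have hbase : γ (2*n) = 2*n := by
    have f3 : sig n p' k' (2*n) = 2*n := by
      rw [sig_apply h0' h1' h2']; split_ifs <;> omega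
    have f4 : tra n p' (2*n) = 2*p' := by
      rw [tra_apply]; split_ifs <;> omega
    rw [f3] at c3
    rw [f4] at c4
    have hne : γ (2*p') ≠ γ (2*n) := fun e => by
      have := γ.injective e; omega
    rw [c4] at hne
    generalize γ (2*n) = w at *
    rw [sig_apply h0 h1 h2] at c3
    rw [tra_apply] at hne
    split_ifs at hne c3 <;> omega
  have hid : ∀ j, j < 2*n → γ (2*n - j) = 2*n - j := by
    intro j
    induction j with
    | zero => intro _; simpa using hbase
    | succ j ih =>
      intro hj
      have e := c2 (2*n - (j+1))
      rw [cyc_apply n (2*n - (j+1)), if_pos (by omega),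
        show 2*n - (j+1) + 1 = 2*n - j by omega, ih (by omega)] at e
      have e' : cyc n (2*n - (j+1)) = 2*n - j := by
        rw [cyc_apply, if_pos (by omega)]; omega
      rw [← e'] at e
      exact ((cyc n).injective e).symm
  have hγ1 : γ = 1 := by
    ext w
    by_cases hw : 1 ≤ w ∧ w ≤ 2*n
    · have := hid (2*n - w) (by omega)
      rw [show 2*n - (2*n - w) = w by omega] at this
      exact this
    · by_contra hc
      exact hw (hγ hc)
  rw [hγ1] at e1
  simp only [inv_one, one_mul, mul_one] at e1
  have g1 := congrArg (fun g : Perm ℕ => g 1) e1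
  have g2 := congrArg (fun g : Perm ℕ => g (2*n)) e1
  simp only [mat_apply h1 h2, mat_apply h1' h2'] at g1 g2
  split_ifs at g1 g2 <;> omega

end Tripod

theorem stmt18 (n : ℕ) (hn : 3 ≤ n) :
    {C : Set (Equiv.Perm ℕ × Equiv.Perm ℕ × Equiv.Perm ℕ × Equiv.Perm ℕ) |
      ∃ σ0 σi σ1 τ : Equiv.Perm ℕ, IsAdmissible n σ0 σi σ1 τ ∧
        HasThreeCycleType n (σ1 * τ) ∧
        C = {p | ∃ γ : Equiv.Perm ℕ, {x | γ x ≠ x} ⊆ Set.Icc 1 (2*n) ∧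
          p = (γ⁻¹ * σ0 * γ, γ⁻¹ * σi * γ, γ⁻¹ * σ1 * γ, γ⁻¹ * τ * γ)}}.ncard
      = (n-1)*(n-2)/2 := by
  let I : Finset (Σ _ : ℕ, ℕ) := (Finset.range n).sigma fun k => Finset.Ico 1 k
  let F : (Σ _ : ℕ, ℕ) → Set Tripod.Q := fun i =>
    Tripod.cls n (Tripod.mat n i.2 i.1) (Tripod.cyc n) (Tripod.sig n i.2 i.1) (Tripod.tra n i.2)
  have hI : ∀ i, i ∈ I ↔ 1 ≤ i.2 ∧ i.2 < i.1 ∧ i.1 < n := by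
    intro i
    simp only [I, Finset.mem_sigma, Finset.mem_range, Finset.mem_Ico]
    tauto
  have hcard : I.card = (n-1)*(n-2)/2 := by
    obtain ⟨m, rfl⟩ : ∃ m, n = m + 1 := ⟨n - 1, by omega⟩
    simp only [I, Finset.card_sigma, Nat.card_Ico]
    rw [Finset.sum_range_succ']
    simp only [Nat.add_sub_cancel, Nat.zero_sub, add_zero]
    rw [Finset.sum_range_id]
    rfl
  rw [← hcard, ← Set.ncard_coe_finset, ← Set.ncard_image_of_injOn (f := F) (s := (I : Set _))]
  · congr 1
    ext C
    constructor
    · rintro ⟨σ0, σi, σ1, τ, hA, hT, rfl⟩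
      obtain ⟨p, k, h0, h1, h2, e⟩ := Tripod.to_std hn hA hT
      exact ⟨⟨k, p⟩, (hI _).2 ⟨h0, h1, h2⟩, e.symm⟩
    · rintro ⟨⟨k, p⟩, hi, rfl⟩
      obtain ⟨h0, h1, h2⟩ := (hI _).1 hi
      exact ⟨_, _, _, _, Tripod.std_admissible h0 h1 h2, Tripod.std_three h0 h1 h2, rfl⟩
  · rintro ⟨k, p⟩ hi ⟨k', p'⟩ hi' e
    obtain ⟨h0, h1, h2⟩ := (hI _).1 hi
    obtain ⟨h0', h1', h2'⟩ := (hI _).1 hi'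
    obtain ⟨rfl, rfl⟩ := Tripod.std_inj h0 h1 h2 h0' h1' h2' e
    rfl
end
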